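/- arXiv:2107.13698 — 15 statements merged into one kernel-verified Lean document; each statement's English description precedes it below -/
import Mathlib

section
/- Let 𝒜, ℬ, 𝒞 be categories each having a zero object, and let i^* : ℬ ⥤ 𝒜, i_* : 𝒜 ⥤ ℬ, j_! : 𝒞 ⥤ ℬ, j^* : ℬ ⥤ 𝒞 be functors such that (i^*, i_*) and (j_!, j^*) are adjoint pairs. If j^*(i_*(A)) is a zero object of 𝒞 for every object A of 𝒜, then i^*(j_!(Y)) is a zero object of 𝒜 for every object Y of 𝒞. -/
open CategoryTheory CategoryTheory.Limits

/-- Let `𝒜`, `ℬ`, `𝒞` be categories each having a zero object, with adjoint pairs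
`(i^*, i_*)` and `(j_!, j^*)`.  If `j^*(i_*(A))` is a zero object for every `A`, then
`i^*(j_!(Y))` is a zero object for every `Y`. -/
theorem stmt0 {𝒜 ℬ 𝒞 : Type*} [Category 𝒜] [Category ℬ] [Category 𝒞]
    [HasZeroObject 𝒜] [HasZeroObject ℬ] [HasZeroObject 𝒞]
    (iStar : ℬ ⥤ 𝒜) (iLow : 𝒜 ⥤ ℬ) (jShriek : 𝒞 ⥤ ℬ) (jStar : ℬ ⥤ 𝒞)
    (adj₁ : iStar ⊣ iLow) (adj₃ : jShriek ⊣ jStar)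
    (h : ∀ A : 𝒜, IsZero (jStar.obj (iLow.obj A))) :
    ∀ Y : 𝒞, IsZero (iStar.obj (jShriek.obj Y)) := by
  intro Y
  have hu : ∀ A : 𝒜, Nonempty (Unique (iStar.obj (jShriek.obj Y) ⟶ A)) := fun A => by
    obtain ⟨u⟩ := (h A).unique_from Y
    exact ⟨((adj₁.homEquiv _ _).trans (adj₃.homEquiv _ _)).unique⟩
  have hI : IsInitial (iStar.obj (jShriek.obj Y)) :=
    IsInitial.ofUniqueHom (fun A => (hu A).some.default)
      (fun A m => (hu A).some.uniq m)
  obtain ⟨Z, hZ⟩ := HasZeroObject.zero (C := 𝒜)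
  exact hZ.of_iso (hI.uniqueUpToIso hZ.isInitial)
end

section
/- Let (𝒜, ℬ, 𝒞) be a recollement of abelian categories and suppose i^* is exact. Then an object X of ℬ satisfies that i^*(X) is a zero object if and only if X lies in the essential image of j_!, i.e., X ≅ j_!(Y) for some object Y of 𝒞. -/
open CategoryTheory CategoryTheory.Limits

/-- A recollement of abelian categories. -/
structure AbelianRecollement (𝒜 : Type*) (ℬ : Type*) (𝒞 : Type*)
    [Category 𝒜] [Category ℬ] [Category 𝒞]
    [Abelian 𝒜] [Abelian ℬ] [Abelian 𝒞] where
  /-- i^* : ℬ ⥤ 𝒜 -/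
  iStar : ℬ ⥤ 𝒜
  /-- i_* : 𝒜 ⥤ ℬ -/
  iLow : 𝒜 ⥤ ℬ
  /-- i^! : ℬ ⥤ 𝒜 -/
  iShriek : ℬ ⥤ 𝒜
  /-- j_! : 𝒞 ⥤ ℬ -/
  jShriek : 𝒞 ⥤ ℬ
  /-- j^* : ℬ ⥤ 𝒞 -/
  jStar : ℬ ⥤ 𝒞
  /-- j_* : 𝒞 ⥤ ℬ -/
  jLow : 𝒞 ⥤ ℬ
  iStar_additive : iStar.Additive
  iLow_additive : iLow.Additive
  iShriek_additive : iShriek.Additive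
  jShriek_additive : jShriek.Additive
  jStar_additive : jStar.Additive
  jLow_additive : jLow.Additive
  /-- (i^*, i_*) is an adjoint pair -/
  adj₁ : iStar ⊣ iLow
  /-- (i_*, i^!) is an adjoint pair -/
  adj₂ : iLow ⊣ iShriek
  /-- (j_!, j^*) is an adjoint pair -/
  adj₃ : jShriek ⊣ jStar
  /-- (j^*, j_*) is an adjoint pair -/
  adj₄ : jStar ⊣ jLow
  iLow_full : iLow.Full
  iLow_faithful : iLow.Faithful
  jShriek_full : jShriek.Full
  jShriek_faithful : jShriek.Faithful
  jLow_full : jLow.Full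
  jLow_faithful : jLow.Faithful
  /-- j^* ∘ i_* = 0 -/
  jStar_iLow_zero : ∀ A : 𝒜, IsZero (jStar.obj (iLow.obj A))
  /-- i_* is exact -/
  iLow_preservesFiniteLimits : PreservesFiniteLimits iLow
  iLow_preservesFiniteColimits : PreservesFiniteColimits iLow
  /-- j^* is exact -/
  jStar_preservesFiniteLimits : PreservesFiniteLimits jStar
  jStar_preservesFiniteColimits : PreservesFiniteColimits jStar
  /-- the composite i_* i^! X ⟶ X ⟶ j_* j^* X vanishes -/
  comp_zero₁ : ∀ X : ℬ, adj₂.counit.app X ≫ adj₄.unit.app X = 0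
  /-- the sequence 0 ⟶ i_* i^! X ⟶ X ⟶ j_* j^* X is exact: the counit is a kernel of the
  unit -/
  exact₁ : ∀ X : ℬ, Nonempty (IsLimit (KernelFork.ofι (adj₂.counit.app X) (comp_zero₁ X)))
  /-- the composite j_! j^* X ⟶ X ⟶ i_* i^* X vanishes -/
  comp_zero₂ : ∀ X : ℬ, adj₃.counit.app X ≫ adj₁.unit.app X = 0
  /-- the sequence j_! j^* X ⟶ X ⟶ i_* i^* X ⟶ 0 is exact: the unit is a cokernel of the
  counit -/
  exact₂ : ∀ X : ℬ, Nonempty (IsColimit (CokernelCofork.ofπ (adj₁.unit.app X) (comp_zero₂ X)))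

/-- In a recollement of abelian categories, if `i^*` is exact then `i^* X` is zero iff `X`
lies in the essential image of `j_!`. -/
theorem stmt5 {𝒜 ℬ 𝒞 : Type*} [Category 𝒜] [Category ℬ] [Category 𝒞]
    [Abelian 𝒜] [Abelian ℬ] [Abelian 𝒞]
    (R : AbelianRecollement 𝒜 ℬ 𝒞)
    (h₁ : PreservesFiniteLimits R.iStar) (h₂ : PreservesFiniteColimits R.iStar)
    (X : ℬ) :
    IsZero (R.iStar.obj X) ↔ ∃ Y : 𝒞, Nonempty (X ≅ R.jShriek.obj Y) := by
  have := R.jShriek_full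
  have := R.jShriek_faithful
  have := R.jShriek_additive
  have := R.iLow_additive
  have := R.jStar_additive
  have := R.iStar_additive
  have := R.jStar_preservesFiniteLimits
  have key : ∀ (Z : ℬ), IsZero (R.iStar.obj Z) → ∀ {W : ℬ} (g : Z ⟶ W),
      R.adj₃.counit.app Z ≫ g = 0 → g = 0 := by
    intro Z hZ W g hg
    obtain ⟨hc⟩ := R.exact₂ Z
    have e := hc.fac (CokernelCofork.ofπ g hg) WalkingParallelPair.one
    have h0 : R.adj₁.unit.app Z = 0 := (R.iLow.map_isZero hZ).eq_of_tgt _ _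
    obtain ⟨d, e'⟩ : ∃ d, R.adj₁.unit.app Z ≫ d = g := ⟨_, e⟩
    rw [← e', h0, zero_comp]
  have hj : ∀ Y : 𝒞, IsZero (R.iStar.obj (R.jShriek.obj Y)) := by
    intro Y
    rw [IsZero.iff_id_eq_zero]
    apply (R.adj₁.homEquiv _ _).injective
    apply (R.adj₃.homEquiv _ _).injective
    exact (R.jStar_iLow_zero _).eq_of_tgt _ _
  constructor
  · intro hX
    refine ⟨R.jStar.obj X, ?_⟩
    have hepi : Epi (R.adj₃.counit.app X) :=
      Preadditive.epi_of_cancel_zero _ (fun g hg => key X hX g hg)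
    have hiso : IsIso (R.jStar.map (R.adj₃.counit.app X)) := by
      have h := R.adj₃.right_triangle_components X
      exact IsIso.of_isIso_fac_left h
    have hmono : Mono (R.adj₃.counit.app X) := by
      apply Preadditive.mono_of_isZero_kernel
      have hiK : IsZero (R.iStar.obj (kernel (R.adj₃.counit.app X))) :=
        IsZero.of_mono (R.iStar.map (kernel.ι (R.adj₃.counit.app X))) (hj _)
      have hjK : IsZero (R.jStar.obj (kernel (R.adj₃.counit.app X))) := by
        have hz : R.jStar.map (kernel.ι (R.adj₃.counit.app X)) = 0 := by
          rw [← cancel_mono (R.jStar.map (R.adj₃.counit.app X)), ← R.jStar.map_comp,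
            kernel.condition, R.jStar.map_zero, zero_comp]
        exact IsZero.of_mono_eq_zero _ hz
      rw [IsZero.iff_id_eq_zero]
      apply key _ hiK
      exact (R.jShriek.map_isZero hjK).eq_of_src _ _
    have : IsIso (R.adj₃.counit.app X) := isIso_of_mono_of_epi _
    exact ⟨(asIso (R.adj₃.counit.app X)).symm⟩
  · rintro ⟨Y, ⟨e⟩⟩
    exact (hj Y).of_iso (R.iStar.mapIso e)
end

section
/- Let (𝒜, ℬ, 𝒞) be a recollement of abelian categories and suppose i^! is exact. Then an object X of ℬ satisfies that i^!(X) is a zero object if and only if X lies in the essential image of j_*, i.e., X ≅ j_*(Y) for some object Y of 𝒞. -/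
open CategoryTheory CategoryTheory.Limits

/-- In a recollement of abelian categories, if `i^!` is exact then `i^! X` is zero iff `X`
lies in the essential image of `j_*`. -/
theorem stmt6 {𝒜 ℬ 𝒞 : Type*} [Category 𝒜] [Category ℬ] [Category 𝒞]
    [Abelian 𝒜] [Abelian ℬ] [Abelian 𝒞]
    (R : AbelianRecollement 𝒜 ℬ 𝒞)
    (h₁ : PreservesFiniteLimits R.iShriek) (h₂ : PreservesFiniteColimits R.iShriek)
    (X : ℬ) :
    IsZero (R.iShriek.obj X) ↔ ∃ Y : 𝒞, Nonempty (X ≅ R.jLow.obj Y) := by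
  have := R.iShriek_additive
  have := R.jStar_additive
  have := R.iLow_additive
  have := R.jLow_additive
  have := R.jLow_full
  have := R.jLow_faithful
  have := R.jStar_preservesFiniteColimits
  have key : ∀ Y : 𝒞, IsZero (R.iShriek.obj (R.jLow.obj Y)) := by
    intro Y
    have h0 : R.adj₂.counit.app (R.jLow.obj Y) = 0 := by
      apply (R.adj₄.homEquiv _ _).symm.injective
      exact (R.jStar_iLow_zero _).eq_of_src _ _
    rw [IsZero.iff_id_eq_zero]
    have := R.adj₂.right_triangle_components (R.jLow.obj Y)
    rw [h0, Functor.map_zero, comp_zero] at this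
    exact this.symm
  have hmono : ∀ Z : ℬ, IsZero (R.iShriek.obj Z) → Mono (R.adj₄.unit.app Z) := by
    intro Z hZ
    obtain ⟨hl⟩ := R.exact₁ Z
    apply Preadditive.mono_of_cancel_zero
    intro W g hg
    obtain ⟨l, hl'⟩ := KernelFork.IsLimit.lift' hl g hg
    rw [← hl']
    have hz : IsZero (R.iLow.obj (R.iShriek.obj Z)) := R.iLow.map_isZero hZ
    have : l = 0 := hz.eq_of_tgt _ _
    rw [this, zero_comp]
  constructor
  · intro hX
    refine ⟨R.jStar.obj X, ?_⟩
    have m := hmono X hX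
    let η := R.adj₄.unit.app X
    let π := cokernel.π η
    have hC : IsZero (R.iShriek.obj (cokernel η)) := by
      have : Epi (R.iShriek.map π) := inferInstance
      exact IsZero.of_epi (R.iShriek.map π) (key _)
    have hjC : IsZero (R.jStar.obj (cokernel η)) := by
      have e : Epi (R.jStar.map π) := inferInstance
      have i : IsIso (R.jStar.map η) := by
        have := R.adj₄.left_triangle_components X
        have h2 : IsIso (R.jStar.map η ≫ R.adj₄.counit.app (R.jStar.obj X)) := by
          rw [this]; exact IsIso.id _
        exact IsIso.of_isIso_comp_right _ (R.adj₄.counit.app (R.jStar.obj X))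
      have hz : R.jStar.map π = 0 := by
        rw [← cancel_epi (R.jStar.map η), ← Functor.map_comp, cokernel.condition]
        simp
      exact IsZero.of_epi_eq_zero _ hz
    have hC0 : IsZero (cokernel η) := by
      have := hmono _ hC
      exact IsZero.of_mono (R.adj₄.unit.app (cokernel η)) (R.jLow.map_isZero hjC)
    have e : Epi η := Preadditive.epi_of_isZero_cokernel η hC0
    have : IsIso η := isIso_of_mono_of_epi η
    exact ⟨asIso η⟩
  · rintro ⟨Y, ⟨e⟩⟩
    exact (key Y).of_iso (R.iShriek.mapIso e)
end

section
/- Let (𝒜, ℬ, 𝒞) be a recollement of abelian categories. If i^* is exact, then j_! is exact; that is, j_! (which, being a left adjoint, is automatically right exact) also preserves finite limits. -/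
open CategoryTheory CategoryTheory.Limits

/-- In a recollement of abelian categories, if `i^*` is exact then `j_!` is exact, i.e. `j_!`
also preserves finite limits. -/
theorem stmt7 {𝒜 ℬ 𝒞 : Type*} [Category 𝒜] [Category ℬ] [Category 𝒞]
    [Abelian 𝒜] [Abelian ℬ] [Abelian 𝒞]
    (R : AbelianRecollement 𝒜 ℬ 𝒞)
    (h₁ : PreservesFiniteLimits R.iStar) (h₂ : PreservesFiniteColimits R.iStar) :
    PreservesFiniteLimits R.jShriek := by
  obtain ⟨iStar, iLow, iShriek, jShriek, jStar, jLow, a1, a2, a3, a4, a5, a6, adj₁, adj₂, adj₃, adj₄,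
    f1, f2, f3, f4, f5, f6, hz, e1, e2, e3, e4, c1, x1, c2, x2⟩ := R
  dsimp only at *
  have hIJ : ∀ X, IsZero (iStar.obj (jShriek.obj X)) := by
    intro X
    rw [IsZero.iff_id_eq_zero]
    apply (adj₁.homEquiv _ _).injective
    apply (adj₃.homEquiv _ _).injective
    exact (hz _).eq_of_tgt _ _
  have hm : jShriek.PreservesMonomorphisms := by
    constructor
    intro X Y f hf
    have hjj : Mono (jStar.map (jShriek.map f)) := by
      have hn : adj₃.unit.app X ≫ jStar.map (jShriek.map f) = f ≫ adj₃.unit.app Y :=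
        (adj₃.unit.naturality f).symm
      have hn2 : jStar.map (jShriek.map f) = inv (adj₃.unit.app X) ≫ f ≫ adj₃.unit.app Y := by
        rw [← hn, IsIso.inv_hom_id_assoc]
      rw [hn2]
      infer_instance
    have hK : IsZero (jStar.obj (kernel (jShriek.map f))) := by
      have h0 : jStar.map (kernel.ι (jShriek.map f)) = 0 := by
        rw [← cancel_mono (jStar.map (jShriek.map f)), ← jStar.map_comp, kernel.condition,
          jStar.map_zero, zero_comp]
      exact IsZero.of_mono_eq_zero _ h0
    obtain ⟨hc⟩ := x2 (kernel (jShriek.map f))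
    have hJK : IsZero (jShriek.obj (jStar.obj (kernel (jShriek.map f)))) :=
      jShriek.map_isZero hK
    have hu : Mono (adj₁.unit.app (kernel (jShriek.map f))) := by
      obtain ⟨r, hr⟩ := CokernelCofork.IsColimit.desc' hc (𝟙 _) (hJK.eq_of_src _ _)
      exact mono_of_mono_fac (h := 𝟙 _) hr
    have hcomp : adj₁.unit.app (kernel (jShriek.map f)) ≫
        iLow.map (iStar.map (kernel.ι (jShriek.map f))) = 0 :=
      (iLow.map_isZero (hIJ X)).eq_of_tgt _ _
    have hKz : IsZero (kernel (jShriek.map f)) := IsZero.of_mono_eq_zero _ hcomp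
    exact Preadditive.mono_of_isZero_kernel _ hKz
  have : PreservesColimitsOfSize.{0, 0} jShriek := adj₃.leftAdjoint_preservesColimits
  have : jShriek.PreservesHomology :=
    Functor.preservesHomology_of_preservesMonos_and_cokernels jShriek
  exact Functor.preservesFiniteLimits_of_preservesHomology jShriek
end

section
/- Let (𝒜, ℬ, 𝒞) be a recollement of abelian categories. If i^! is exact, then j_* is exact; that is, j_* (which, being a right adjoint, is automatically left exact) also preserves finite colimits. -/
open CategoryTheory CategoryTheory.Limits

/-- In a recollement of abelian categories, if `i^!` is exact then `j_*` is exact, i.e. `j_*`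
also preserves finite colimits. -/
theorem stmt8 {𝒜 ℬ 𝒞 : Type*} [Category 𝒜] [Category ℬ] [Category 𝒞]
    [Abelian 𝒜] [Abelian ℬ] [Abelian 𝒞]
    (R : AbelianRecollement 𝒜 ℬ 𝒞)
    (h₁ : PreservesFiniteLimits R.iShriek) (h₂ : PreservesFiniteColimits R.iShriek) :
    PreservesFiniteColimits R.jLow := by
  have := R.jLow_additive
  have := R.jLow_full
  have := R.jLow_faithful
  have := R.iLow_additive
  have := R.jStar_additive
  have := R.jStar_preservesFiniteColimits
  have hL : PreservesLimitsOfSize.{0, 0} R.jLow := R.adj₄.rightAdjoint_preservesLimits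
  have hE : R.jLow.PreservesEpimorphisms := by
    refine ⟨fun {X Y} f hf => ?_⟩
    -- the restriction of the cokernel vanishes
    have e1 : Epi (R.jStar.map (R.jLow.map f)) := by
      have h := R.adj₄.counit.naturality f
      have h' : R.jStar.map (R.jLow.map f) =
          R.adj₄.counit.app X ≫ f ≫ inv (R.adj₄.counit.app Y) := by
        rw [← Category.assoc, IsIso.eq_comp_inv]
        exact h
      rw [h']
      infer_instance
    have e2 : Epi (R.jStar.map (cokernel.π (R.jLow.map f))) := inferInstance
    have z1 : R.jStar.map (cokernel.π (R.jLow.map f)) = 0 := by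
      rw [← cancel_epi (R.jStar.map (R.jLow.map f)), ← R.jStar.map_comp, cokernel.condition,
        Functor.map_zero, comp_zero]
    have zK : IsZero (R.jStar.obj (cokernel (R.jLow.map f))) := IsZero.of_epi_eq_zero _ z1
    have zY : IsZero (R.iShriek.obj (R.jLow.obj Y)) := by
      rw [IsZero.iff_id_eq_zero]
      apply (R.adj₂.homEquiv _ _).symm.injective
      apply (R.adj₄.homEquiv _ _).symm.injective
      exact (R.jStar_iLow_zero _).eq_of_src _ _
    have zS : IsZero (R.iShriek.obj (cokernel (R.jLow.map f))) := by
      have e3 : Epi (R.iShriek.map (cokernel.π (R.jLow.map f))) := inferInstance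
      exact IsZero.of_epi_eq_zero (R.iShriek.map (cokernel.π (R.jLow.map f))) (zY.eq_of_src _ _)
    have zT := R.iLow.map_isZero zS
    obtain ⟨hlim⟩ := R.exact₁ (cokernel (R.jLow.map f))
    have zu : R.adj₄.unit.app (cokernel (R.jLow.map f)) = 0 :=
      (R.jLow.map_isZero zK).eq_of_tgt _ _
    have zC : IsZero (cokernel (R.jLow.map f)) := by
      rw [IsZero.iff_id_eq_zero]
      obtain ⟨l, hl⟩ := KernelFork.IsLimit.lift' hlim (𝟙 _) (by rw [zu, comp_zero])
      refine hl.symm.trans ?_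
      rw [zT.eq_of_tgt l 0, zero_comp]
    exact Preadditive.epi_of_cokernel_zero (zC.eq_of_tgt _ _)
  have := R.jLow.preservesHomology_of_preservesEpis_and_kernels
  exact R.jLow.preservesFiniteColimits_of_preservesHomology
end

section
/- Let (𝒜, ℬ, 𝒞) be a recollement of abelian categories. If i^! is exact, then for every object X of ℬ the unit η_X : X → j_* j^* X of the adjunction (j^*, j_*) is an epimorphism, so that 0 → i_* i^! X → X → j_* j^* X → 0 is a short exact sequence in ℬ, the first map being the counit of (i_*, i^!) at X. -/
open CategoryTheory CategoryTheory.Limits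

/-- In a recollement of abelian categories, if `i^!` is exact then for every `X : ℬ` the
unit `η_X : X ⟶ j_* j^* X` is an epimorphism, so that
`0 ⟶ i_* i^! X ⟶ X ⟶ j_* j^* X ⟶ 0` is a short exact sequence. -/
theorem stmt9 {𝒜 ℬ 𝒞 : Type*} [Category 𝒜] [Category ℬ] [Category 𝒞]
    [Abelian 𝒜] [Abelian ℬ] [Abelian 𝒞]
    (R : AbelianRecollement 𝒜 ℬ 𝒞)
    (h₁ : PreservesFiniteLimits R.iShriek) (h₂ : PreservesFiniteColimits R.iShriek)
    (X : ℬ) :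
    Epi (R.adj₄.unit.app X) ∧
    (ShortComplex.mk (R.adj₂.counit.app X) (R.adj₄.unit.app X)
      (R.comp_zero₁ X)).ShortExact := by
  have := R.iLow_full
  have := R.iLow_faithful
  have := R.jLow_full
  have := R.jLow_faithful
  have := R.iLow_additive
  have := R.iShriek_additive
  have := R.jStar_additive
  have := R.jLow_additive
  have := R.jStar_preservesFiniteColimits
  -- the shriek functor kills the image of j_*
  have hz : ∀ Z : 𝒞, IsZero (R.iShriek.obj (R.jLow.obj Z)) := by
    intro Z
    rw [IsZero.iff_id_eq_zero]
    apply (R.adj₂.homEquiv _ _).symm.injective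
    apply (R.adj₄.homEquiv _ _).symm.injective
    exact (R.jStar_iLow_zero _).eq_of_src _ _
  have hepi : Epi (R.adj₄.unit.app X) := by
    apply Preadditive.epi_of_isZero_cokernel
    set η := R.adj₄.unit.app X with hη
    have hi : IsZero (R.iShriek.obj (cokernel η)) := by
      rw [IsZero.iff_id_eq_zero]
      have : Epi (R.iShriek.map (cokernel.π η)) := inferInstance
      rw [← cancel_epi (R.iShriek.map (cokernel.π η))]
      exact (hz _).eq_of_src _ _
    have hj : IsZero (R.jStar.obj (cokernel η)) := by
      rw [IsZero.iff_id_eq_zero]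
      have : Epi (R.jStar.map (cokernel.π η)) := inferInstance
      have hiso : IsIso (R.jStar.map η) := by
        have h := R.adj₄.left_triangle_components X
        rw [← hη] at h
        have : IsIso (R.jStar.map η ≫ R.adj₄.counit.app (R.jStar.obj X)) := by
          rw [h]; exact IsIso.id (R.jStar.obj X)
        exact IsIso.of_isIso_comp_right _ (R.adj₄.counit.app (R.jStar.obj X))
      rw [← cancel_epi (R.jStar.map (cokernel.π η)), ← cancel_epi (R.jStar.map η),
        ← Functor.map_comp_assoc]
      simp
    obtain ⟨hl⟩ := R.exact₁ (cokernel η)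
    rw [IsZero.iff_id_eq_zero]
    have h0 : 𝟙 (cokernel η) ≫ R.adj₄.unit.app (cokernel η) = 0 :=
      (R.jLow.map_isZero hj).eq_of_tgt _ _
    obtain ⟨l, hl'⟩ := KernelFork.IsLimit.lift' hl _ h0
    rw [← hl', (R.iLow.map_isZero hi).eq_of_tgt l 0, zero_comp]
  refine ⟨hepi, ?_⟩
  obtain ⟨hl⟩ := R.exact₁ X
  have hm : Mono (R.adj₂.counit.app X) := Fork.IsLimit.mono hl
  exact { exact := ShortComplex.exact_of_f_is_kernel _ hl, mono_f := hm, epi_g := hepi }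
end

section
/- Let (𝒜, ℬ, 𝒞) be a recollement of abelian categories. If i^* is exact, then for every object X of ℬ the counit ε_X : j_! j^* X → X of the adjunction (j_!, j^*) is a monomorphism, so that 0 → j_! j^* X → X → i_* i^* X → 0 is a short exact sequence in ℬ, the second map being the unit of (i^*, i_*) at X. -/
open CategoryTheory CategoryTheory.Limits

/-- In a recollement of abelian categories, if `i^*` is exact then for every `X : ℬ` the
counit `ε_X : j_! j^* X ⟶ X` is a monomorphism, so that
`0 ⟶ j_! j^* X ⟶ X ⟶ i_* i^* X ⟶ 0` is a short exact sequence. -/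
theorem stmt10 {𝒜 ℬ 𝒞 : Type*} [Category 𝒜] [Category ℬ] [Category 𝒞]
    [Abelian 𝒜] [Abelian ℬ] [Abelian 𝒞]
    (R : AbelianRecollement 𝒜 ℬ 𝒞)
    (h₁ : PreservesFiniteLimits R.iStar) (h₂ : PreservesFiniteColimits R.iStar)
    (X : ℬ) :
    Mono (R.adj₃.counit.app X) ∧
    (ShortComplex.mk (R.adj₃.counit.app X) (R.adj₁.unit.app X)
      (R.comp_zero₂ X)).ShortExact := by
  have := h₁
  have := h₂
  have := R.jStar_preservesFiniteLimits
  have := R.jStar_preservesFiniteColimits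
  have := R.jShriek_full
  have := R.jShriek_faithful
  have := R.jShriek_additive
  have := R.jStar_additive
  have := R.iStar_additive
  have := R.iLow_additive
  have hm : Mono (R.adj₃.counit.app X) := by
    apply Preadditive.mono_of_kernel_zero
    have hiso : IsIso (R.jStar.map (R.adj₃.counit.app X)) := inferInstance
    have hjι : R.jStar.map (kernel.ι (R.adj₃.counit.app X)) = 0 := by
      rw [← cancel_mono (R.jStar.map (R.adj₃.counit.app X)), ← R.jStar.map_comp,
        kernel.condition, R.jStar.map_zero, zero_comp]
    have hjK : IsZero (R.jStar.obj (kernel (R.adj₃.counit.app X))) :=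
      IsZero.of_mono_eq_zero _ hjι
    have hc : R.adj₃.counit.app (kernel (R.adj₃.counit.app X)) = 0 :=
      (R.jShriek.map_isZero hjK).eq_of_src _ _
    obtain ⟨hcol⟩ := R.exact₂ (kernel (R.adj₃.counit.app X))
    obtain ⟨l, hl⟩ := CokernelCofork.IsColimit.desc' hcol
      (𝟙 (kernel (R.adj₃.counit.app X))) (by rw [hc, zero_comp])
    have hij : IsZero (R.iStar.obj (R.jShriek.obj (R.jStar.obj X))) := by
      rw [IsZero.iff_id_eq_zero]
      apply (R.adj₁.homEquiv _ _).injective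
      apply (R.adj₃.homEquiv _ _).injective
      exact (R.jStar_iLow_zero _).eq_of_tgt _ _
    have hiK : IsZero (R.iStar.obj (kernel (R.adj₃.counit.app X))) :=
      IsZero.of_mono (R.iStar.map (kernel.ι (R.adj₃.counit.app X))) hij
    have hl0 : l = 0 := (R.iLow.map_isZero hiK).eq_of_src _ _
    rw [hl0, comp_zero] at hl
    rw [← Category.id_comp (kernel.ι _), ← hl, zero_comp]
  obtain ⟨hcol⟩ := R.exact₂ X
  exact ⟨hm, { exact := ShortComplex.exact_of_g_is_cokernel _ hcol
               mono_f := hm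
               epi_g := Cofork.IsColimit.epi hcol }⟩
end

section
/- Let (𝒜, ℬ, 𝒞) be a recollement of abelian categories, and let W be the class of morphisms f of ℬ such that j^*(f) is an isomorphism. Then j^* : ℬ ⥤ 𝒞 exhibits 𝒞 as the localization of ℬ at W; that is, j^* sends every morphism of W to an isomorphism, and the induced functor from the Gabriel–Zisman localization ℬ[W⁻¹] to 𝒞 is an equivalence of categories. -/
open CategoryTheory CategoryTheory.Limits

/-- In a recollement of abelian categories, `j^* : ℬ ⥤ 𝒞` exhibits `𝒞` as the localization
of `ℬ` at the class of morphisms that `j^*` sends to isomorphisms. -/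
theorem stmt11 {𝒜 ℬ 𝒞 : Type*} [Category 𝒜] [Category ℬ] [Category 𝒞]
    [Abelian 𝒜] [Abelian ℬ] [Abelian 𝒞]
    (R : AbelianRecollement 𝒜 ℬ 𝒞) :
    R.jStar.IsLocalization ((MorphismProperty.isomorphisms 𝒞).inverseImage R.jStar) := by
  have := R.jLow_full
  have := R.jLow_faithful
  exact R.adj₄.isLocalization
end

section
/- Let (𝒜, ℬ, 𝒞) be a recollement of triangulated categories, and let W be the class of morphisms f of ℬ such that j^*(f) is an isomorphism. Then j^* : ℬ ⥤ 𝒞 exhibits 𝒞 as the localization of ℬ at W; that is, j^* sends every morphism of W to an isomorphism, and the induced functor from the localization ℬ[W⁻¹] to 𝒞 is an equivalence of categories. -/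
open CategoryTheory CategoryTheory.Limits CategoryTheory.Pretriangulated

/-- A recollement of triangulated categories. -/
structure TriangulatedRecollement (𝒜 ℬ 𝒞 : Type*) [Category 𝒜] [Category ℬ] [Category 𝒞]
    [HasZeroObject 𝒜] [HasZeroObject ℬ] [HasZeroObject 𝒞]
    [Preadditive 𝒜] [Preadditive ℬ] [Preadditive 𝒞]
    [HasShift 𝒜 ℤ] [HasShift ℬ ℤ] [HasShift 𝒞 ℤ]
    [∀ n : ℤ, (shiftFunctor 𝒜 n).Additive] [∀ n : ℤ, (shiftFunctor ℬ n).Additive]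
    [∀ n : ℤ, (shiftFunctor 𝒞 n).Additive]
    [Pretriangulated 𝒜] [Pretriangulated ℬ] [Pretriangulated 𝒞] where
  /-- i^* : ℬ ⥤ 𝒜 -/
  iStar : ℬ ⥤ 𝒜
  /-- i_* : 𝒜 ⥤ ℬ -/
  iLow : 𝒜 ⥤ ℬ
  /-- i^! : ℬ ⥤ 𝒜 -/
  iShriek : ℬ ⥤ 𝒜
  /-- j_! : 𝒞 ⥤ ℬ -/
  jShriek : 𝒞 ⥤ ℬ
  /-- j^* : ℬ ⥤ 𝒞 -/
  jStar : ℬ ⥤ 𝒞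
  /-- j_* : 𝒞 ⥤ ℬ -/
  jLow : 𝒞 ⥤ ℬ
  iStar_additive : iStar.Additive
  iLow_additive : iLow.Additive
  iShriek_additive : iShriek.Additive
  jShriek_additive : jShriek.Additive
  jStar_additive : jStar.Additive
  jLow_additive : jLow.Additive
  /-- the six functors commute with the shift -/
  iStar_commShift : iStar.CommShift ℤ
  iLow_commShift : iLow.CommShift ℤ
  iShriek_commShift : iShriek.CommShift ℤ
  jShriek_commShift : jShriek.CommShift ℤ
  jStar_commShift : jStar.CommShift ℤ
  jLow_commShift : jLow.CommShift ℤ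
  /-- the six functors are triangulated (send distinguished triangles to distinguished
  triangles) -/
  iStar_isTriangulated : letI := iStar_commShift; iStar.IsTriangulated
  iLow_isTriangulated : letI := iLow_commShift; iLow.IsTriangulated
  iShriek_isTriangulated : letI := iShriek_commShift; iShriek.IsTriangulated
  jShriek_isTriangulated : letI := jShriek_commShift; jShriek.IsTriangulated
  jStar_isTriangulated : letI := jStar_commShift; jStar.IsTriangulated
  jLow_isTriangulated : letI := jLow_commShift; jLow.IsTriangulated
  /-- (i^*, i_*) is an adjoint pair -/
  adj₁ : iStar ⊣ iLow
  /-- (i_*, i^!) is an adjoint pair -/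
  adj₂ : iLow ⊣ iShriek
  /-- (j_!, j^*) is an adjoint pair -/
  adj₃ : jShriek ⊣ jStar
  /-- (j^*, j_*) is an adjoint pair -/
  adj₄ : jStar ⊣ jLow
  iLow_full : iLow.Full
  iLow_faithful : iLow.Faithful
  jShriek_full : jShriek.Full
  jShriek_faithful : jShriek.Faithful
  jLow_full : jLow.Full
  jLow_faithful : jLow.Faithful
  /-- j^* ∘ i_* ≅ 0 -/
  jStar_iLow_zero : ∀ A : 𝒜, IsZero (jStar.obj (iLow.obj A))
  /-- for every `X : ℬ` there is a distinguished triangle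
  `j_! j^* X ⟶ X ⟶ i_* i^* X ⟶ (j_! j^* X)⟦1⟧` -/
  triangle₁ : ∀ X : ℬ, ∃ d : iLow.obj (iStar.obj X) ⟶ (jShriek.obj (jStar.obj X))⟦(1 : ℤ)⟧,
    Triangle.mk (adj₃.counit.app X) (adj₁.unit.app X) d ∈ distTriang ℬ
  /-- for every `X : ℬ` there is a distinguished triangle
  `i_* i^! X ⟶ X ⟶ j_* j^* X ⟶ (i_* i^! X)⟦1⟧` -/
  triangle₂ : ∀ X : ℬ, ∃ d : jLow.obj (jStar.obj X) ⟶ (iLow.obj (iShriek.obj X))⟦(1 : ℤ)⟧,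
    Triangle.mk (adj₂.counit.app X) (adj₄.unit.app X) d ∈ distTriang ℬ

/-- In a recollement of triangulated categories, `j^* : ℬ ⥤ 𝒞` exhibits `𝒞` as the
localization of `ℬ` at the class of morphisms that `j^*` sends to isomorphisms. -/
theorem stmt12 {𝒜 ℬ 𝒞 : Type*} [Category 𝒜] [Category ℬ] [Category 𝒞]
    [HasZeroObject 𝒜] [HasZeroObject ℬ] [HasZeroObject 𝒞]
    [Preadditive 𝒜] [Preadditive ℬ] [Preadditive 𝒞]
    [HasShift 𝒜 ℤ] [HasShift ℬ ℤ] [HasShift 𝒞 ℤ]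
    [∀ n : ℤ, (shiftFunctor 𝒜 n).Additive] [∀ n : ℤ, (shiftFunctor ℬ n).Additive]
    [∀ n : ℤ, (shiftFunctor 𝒞 n).Additive]
    [Pretriangulated 𝒜] [Pretriangulated ℬ] [Pretriangulated 𝒞]
    (R : TriangulatedRecollement 𝒜 ℬ 𝒞) :
    R.jStar.IsLocalization ((MorphismProperty.isomorphisms 𝒞).inverseImage R.jStar) := by
  haveI := R.jLow_full
  haveI := R.jLow_faithful
  exact R.adj₄.isLocalization
end

section
/- Let (𝒜, ℬ, 𝒞) be a recollement of abelian categories and suppose 𝒞 has enough projective objects. For an object B of ℬ the following are equivalent: (a) there exist projective objects P₁, P₀ of 𝒞 and an exact sequence j_!(P₁) → j_!(P₀) → B → 0 in ℬ; (b) Hom_ℬ(B, i_*(A)) = 0 for every object A of 𝒜, and every short exact sequence 0 → i_*(A) → E → B → 0 in ℬ (with A an object of 𝒜) splits. -/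
open CategoryTheory CategoryTheory.Limits

theorem rec_hom_zero {𝒜 ℬ 𝒞 : Type*} [Category 𝒜] [Category ℬ] [Category 𝒞]
    [Abelian 𝒜] [Abelian ℬ] [Abelian 𝒞]
    (R : AbelianRecollement 𝒜 ℬ 𝒞) (P : 𝒞) (A : 𝒜) (f : R.jShriek.obj P ⟶ R.iLow.obj A) :
    f = 0 := by
  apply (R.adj₃.homEquiv _ _).injective
  exact (R.jStar_iLow_zero A).eq_of_tgt _ _

theorem rec_cover {𝒜 ℬ 𝒞 : Type*} [Category 𝒜] [Category ℬ] [Category 𝒞]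
    [Abelian 𝒜] [Abelian ℬ] [Abelian 𝒞]
    (R : AbelianRecollement 𝒜 ℬ 𝒞) [EnoughProjectives 𝒞] (X : ℬ)
    (h : R.adj₁.unit.app X = 0) :
    ∃ (P : 𝒞) (_ : Projective P) (g : R.jShriek.obj P ⟶ X), Epi g := by
  have : Epi (R.adj₃.counit.app X) := by
    obtain ⟨hc⟩ := R.exact₂ X
    refine Preadditive.epi_of_cancel_zero _ fun {Y} k hk => ?_
    have := hc.fac (CokernelCofork.ofπ k hk) WalkingParallelPair.one
    simp only [Cofork.ofπ_ι_app] at this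
    change R.adj₁.unit.app X ≫ _ = k at this
    generalize hc.desc (CokernelCofork.ofπ k hk) = d at this
    rw [← this]
    exact (congrArg (fun t => t ≫ d) h).trans zero_comp
  have := R.adj₃.isLeftAdjoint
  have : Epi (R.jShriek.map (Projective.π (R.jStar.obj X))) := inferInstance
  exact ⟨_, Projective.projective_over (R.jStar.obj X),
    R.jShriek.map (Projective.π (R.jStar.obj X)) ≫ R.adj₃.counit.app X, epi_comp _ _⟩

/-- Let `(𝒜, ℬ, 𝒞)` be a recollement of abelian categories where `𝒞` has enough projectives.
For `B : ℬ` the following are equivalent: (a) there is an exact sequence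
`j_! P₁ ⟶ j_! P₀ ⟶ B ⟶ 0` with `P₁`, `P₀` projective in `𝒞`; (b) `Hom_ℬ(B, i_* A) = 0` for
all `A : 𝒜` and every short exact sequence `0 ⟶ i_* A ⟶ E ⟶ B ⟶ 0` splits. -/
theorem stmt13 {𝒜 ℬ 𝒞 : Type*} [Category 𝒜] [Category ℬ] [Category 𝒞]
    [Abelian 𝒜] [Abelian ℬ] [Abelian 𝒞]
    (R : AbelianRecollement 𝒜 ℬ 𝒞) [EnoughProjectives 𝒞] (B : ℬ) :
    (∃ (P₁ P₀ : 𝒞) (_ : Projective P₁) (_ : Projective P₀)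
        (f : R.jShriek.obj P₁ ⟶ R.jShriek.obj P₀) (g : R.jShriek.obj P₀ ⟶ B)
        (w : f ≫ g = 0), Epi g ∧ (ShortComplex.mk f g w).Exact) ↔
    ((∀ (A : 𝒜) (f : B ⟶ R.iLow.obj A), f = 0) ∧
      (∀ (A : 𝒜) (E : ℬ) (f : R.iLow.obj A ⟶ E) (g : E ⟶ B) (w : f ≫ g = 0),
        (ShortComplex.mk f g w).ShortExact → ∃ s : B ⟶ E, s ≫ g = 𝟙 B)) := by
  constructor
  · rintro ⟨P₁, P₀, hP₁, hP₀, f, g, w, hg, hex⟩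
    refine ⟨fun A k => ?_, fun A E i q w' hS => ?_⟩
    · rw [← cancel_epi g, comp_zero]
      exact rec_hom_zero R _ _ _
    · have := R.jStar_preservesFiniteColimits
      have hpr : Projective (R.jShriek.obj P₀) := R.adj₃.map_projective _ hP₀
      have : Epi q := hS.epi_g
      have : Mono i := hS.mono_f
      let h := Projective.factorThru g q
      have hh : h ≫ q = g := Projective.factorThru_comp g q
      have h0 : f ≫ h = 0 := by
        have e : (f ≫ h) ≫ q = 0 := by rw [Category.assoc, hh, w]
        have e2 := hS.exact.lift_f (f ≫ h) e
        rw [← e2]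
        have e3 := rec_hom_zero R P₁ A (hS.exact.lift (f ≫ h) e)
        rw [e3, zero_comp]
      have : Epi (ShortComplex.mk f g w).g := hg
      refine ⟨hex.desc h h0, ?_⟩
      have e4 : g ≫ hex.desc h h0 = h := hex.g_desc h h0
      rw [← cancel_epi g, reassoc_of% e4, hh, Category.comp_id]
  · rintro ⟨hB, hE⟩
    obtain ⟨P₀, hP₀, g, hg⟩ := rec_cover R B (hB _ _)
    have hu : R.adj₁.unit.app (kernel g) = 0 := by
      obtain ⟨u, hu⟩ : ∃ u, u = R.adj₁.unit.app (kernel g) := ⟨_, rfl⟩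
      rw [← hu]
      let a : _ ⟶ pushout u (kernel.ι g) := pushout.inl u (kernel.ι g)
      let b : _ ⟶ pushout u (kernel.ι g) := pushout.inr u (kernel.ι g)
      have hab : u ≫ a = kernel.ι g ≫ b := pushout.condition
      let q : pushout u (kernel.ι g) ⟶ B := pushout.desc 0 g (by simp)
      have haq : a ≫ q = 0 := pushout.inl_desc _ _ _
      have hbq : b ≫ q = g := pushout.inr_desc _ _ _
      have hma : Mono a := inferInstanceAs (Mono (pushout.inl u (kernel.ι g)))
      have hq : Epi q := by
        have : Epi (b ≫ q) := by rw [hbq]; exact hg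
        exact epi_of_epi b q
      have hk : (ShortComplex.mk (kernel.ι g) g (kernel.condition g)).Exact :=
        ShortComplex.exact_kernel g
      have : Epi (ShortComplex.mk (kernel.ι g) g (kernel.condition g)).g := hg
      have hS : (ShortComplex.mk a q haq).ShortExact := by
        refine ShortComplex.ShortExact.mk' ?_ hma hq
        apply ShortComplex.exact_of_g_is_cokernel
        refine CokernelCofork.IsColimit.ofπ' q haq fun {Y} k hk' => ?_
        have e : kernel.ι g ≫ b ≫ k = 0 := by
          rw [← reassoc_of% hab, hk', comp_zero]
        refine ⟨hk.desc (b ≫ k) e, ?_⟩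
        have e2 : g ≫ hk.desc (b ≫ k) e = b ≫ k := hk.g_desc _ e
        apply pushout.hom_ext
        · change a ≫ q ≫ _ = a ≫ k
          rw [reassoc_of% haq, hk', zero_comp]
        · change b ≫ q ≫ _ = b ≫ k
          rw [reassoc_of% hbq, e2]
      obtain ⟨s, hs⟩ := hE _ _ a q haq hS
      have e : (𝟙 _ - q ≫ s) ≫ q = 0 := by
        simp [Preadditive.sub_comp, hs]
      have : Mono (ShortComplex.mk a q haq).f := hma
      obtain ⟨r, hr⟩ : ∃ r, r ≫ a = 𝟙 _ - q ≫ s :=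
        ⟨hS.exact.lift _ e, hS.exact.lift_f _ e⟩
      have har : a ≫ r = 𝟙 _ := by
        rw [← cancel_mono a, Category.assoc, hr, Preadditive.comp_sub, reassoc_of% haq]
        simp
      have hbr : b ≫ r = 0 := rec_hom_zero R _ _ _
      rw [← Category.comp_id u, ← har, reassoc_of% hab, hbr, comp_zero]
    obtain ⟨P₁, hP₁, p, hp⟩ := rec_cover R (kernel g) hu
    refine ⟨P₁, P₀, hP₁, hP₀, p ≫ kernel.ι g, g, by simp, hg, ?_⟩
    rw [ShortComplex.exact_iff_epi_kernel_lift]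
    convert hp using 1
    rw [← cancel_mono (kernel.ι g)]
    simp
end

section
/- Let (𝒜, ℬ, 𝒞) be a recollement of abelian categories and suppose 𝒞 has enough projective objects. Let 𝒳 be the full subcategory of ℬ consisting of the objects B such that Hom_ℬ(B, i_*(A)) = 0 for every object A of 𝒜 and every short exact sequence 0 → i_*(A) → E → B → 0 in ℬ splits. Then the restriction of j^* to 𝒳 is fully faithful and essentially surjective, i.e., j^* induces an equivalence of categories 𝒳 ≃ 𝒞. -/
open CategoryTheory CategoryTheory.Limits

namespace AbelianRecollement

section
universe u₁ v₁ u₂ v₂ u₃ v₃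
variable {𝒜 : Type u₁} {ℬ : Type u₂} {𝒞 : Type u₃} [Category.{v₁} 𝒜] [Category.{v₂} ℬ]
    [Category.{v₃} 𝒞] [Abelian 𝒜] [Abelian ℬ] [Abelian 𝒞]
    (R : AbelianRecollement 𝒜 ℬ 𝒞)

lemma unit_isIso (C : 𝒞) : IsIso (R.adj₃.unit.app C) := by
  have := R.jShriek_full
  have := R.jShriek_faithful
  infer_instance

lemma map_counit_isIso (B : ℬ) : IsIso (R.jStar.map (R.adj₃.counit.app B)) := by
  have := R.unit_isIso (R.jStar.obj B)
  have h := R.adj₃.right_triangle_components B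
  have : IsIso (R.adj₃.unit.app (R.jStar.obj B) ≫ R.jStar.map (R.adj₃.counit.app B)) := by
    rw [h]; exact IsIso.id (R.jStar.obj B)
  exact IsIso.of_isIso_comp_left (R.adj₃.unit.app (R.jStar.obj B)) _

lemma jShriek_hom_zero {C : 𝒞} {A : 𝒜} (f : R.jShriek.obj C ⟶ R.iLow.obj A) : f = 0 :=
  (R.adj₃.homEquiv _ _).injective ((R.jStar_iLow_zero A).eq_of_tgt _ _)

lemma counit_isIso_of_isZero (K : ℬ) (h : IsZero (R.jStar.obj K)) :
    IsIso (R.adj₂.counit.app K) := by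
  have h0 : R.adj₄.unit.app K = 0 :=
    (R.adj₄.homEquiv _ _).symm.injective (h.eq_of_src _ _)
  obtain ⟨hl⟩ := R.exact₁ K
  obtain ⟨l, hl'⟩ := KernelFork.IsLimit.lift' hl (𝟙 K) (by rw [h0, comp_zero])
  have hl' : l ≫ R.adj₂.counit.app K = 𝟙 K := hl'
  have : Mono (R.adj₂.counit.app K) := mono_of_isLimit_fork hl
  exact ⟨l, by rw [← cancel_mono (R.adj₂.counit.app K), Category.assoc, hl']; simp, hl'⟩

lemma jShriek_split (C : 𝒞) (A : 𝒜) (E : ℬ) (f : R.iLow.obj A ⟶ E) (g : E ⟶ R.jShriek.obj C)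
    (w : f ≫ g = 0) (hS : (ShortComplex.mk f g w).ShortExact) :
    ∃ s : R.jShriek.obj C ⟶ E, s ≫ g = 𝟙 _ := by
  have := R.jStar_additive
  have := R.jStar_preservesFiniteLimits
  have := R.jStar_preservesFiniteColimits
  have hS' := hS.map_of_exact R.jStar
  have : IsIso (R.jStar.map g) := hS'.isIso_g_iff.2 (R.jStar_iLow_zero A)
  refine ⟨(R.adj₃.homEquiv _ _).symm (R.adj₃.unit.app C ≫ inv (R.jStar.map g)), ?_⟩
  apply (R.adj₃.homEquiv _ _).injective
  rw [R.adj₃.homEquiv_naturality_right, Equiv.apply_symm_apply]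
  simp [Adjunction.homEquiv_unit]

lemma counit_isIso (B : ℬ) (h₁ : ∀ (A : 𝒜) (f : B ⟶ R.iLow.obj A), f = 0)
    (h₂ : ∀ (A : 𝒜) (E : ℬ) (f : R.iLow.obj A ⟶ E) (g : E ⟶ B) (w : f ≫ g = 0),
          (ShortComplex.mk f g w).ShortExact → ∃ s : B ⟶ E, s ≫ g = 𝟙 B) :
    IsIso (R.adj₃.counit.app B) := by
  have := R.jStar_additive
  have := R.jStar_preservesFiniteLimits
  have := R.jStar_preservesFiniteColimits
  obtain ⟨hc⟩ := R.exact₂ B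
  have hepi : Epi (R.adj₃.counit.app B) := by
    refine Preadditive.epi_of_cancel_zero _ fun {Z} g hg => ?_
    obtain ⟨l, hl⟩ := CokernelCofork.IsColimit.desc' hc g hg
    have hl : R.adj₁.unit.app B ≫ l = g := hl
    rw [← hl, h₁ _ (R.adj₁.unit.app B), zero_comp]
  have hS : (ShortComplex.mk (kernel.ι (R.adj₃.counit.app B)) (R.adj₃.counit.app B)
      (kernel.condition _)).ShortExact :=
    { exact := ShortComplex.exact_kernel _
      mono_f := inferInstanceAs (Mono (kernel.ι _))
      epi_g := hepi }
  have hK : IsZero (R.jStar.obj (kernel (R.adj₃.counit.app B))) :=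
    (hS.map_of_exact R.jStar).isIso_g_iff.1 (R.map_counit_isIso B)
  have := R.counit_isIso_of_isZero _ hK
  let e := asIso (R.adj₂.counit.app (kernel (R.adj₃.counit.app B)))
  have w : (e.hom ≫ kernel.ι (R.adj₃.counit.app B)) ≫ R.adj₃.counit.app B = 0 := by simp
  have hS2 : (ShortComplex.mk _ _ w).ShortExact :=
    ShortComplex.shortExact_of_iso
      (ShortComplex.isoMk e.symm (Iso.refl _) (Iso.refl _) (by simp) (by simp) :
        ShortComplex.mk (kernel.ι (R.adj₃.counit.app B)) (R.adj₃.counit.app B)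
          (kernel.condition _) ≅ ShortComplex.mk _ _ w) hS
  obtain ⟨s, hs⟩ := h₂ _ _ _ _ w hS2
  refine ⟨s, ?_, hs⟩
  have hz : (𝟙 _ - R.adj₃.counit.app B ≫ s) ≫ R.adj₃.counit.app B = 0 := by
    simp [Preadditive.sub_comp, hs]
  have h0 : kernel.lift _ _ hz ≫ e.inv = 0 := R.jShriek_hom_zero _
  have h1 : kernel.lift _ _ hz = 0 := by
    rw [← cancel_mono e.inv, h0, zero_comp]
  have h2 := kernel.lift_ι _ _ hz
  rw [h1, zero_comp] at h2
  exact (sub_eq_zero.1 h2.symm).symm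

end

end AbelianRecollement

/-- Let `(𝒜, ℬ, 𝒞)` be a recollement of abelian categories where `𝒞` has enough projectives,
and let `𝒳 ⊆ ℬ` be the full subcategory of objects `B` with `Hom_ℬ(B, i_* A) = 0` for all
`A : 𝒜` and such that every short exact sequence `0 ⟶ i_* A ⟶ E ⟶ B ⟶ 0` splits.  Then the
restriction of `j^*` to `𝒳` is fully faithful and essentially surjective, i.e. induces an
equivalence `𝒳 ≃ 𝒞`. -/
theorem stmt14 {𝒜 ℬ 𝒞 : Type*} [Category 𝒜] [Category ℬ] [Category 𝒞]
    [Abelian 𝒜] [Abelian ℬ] [Abelian 𝒞]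
    (R : AbelianRecollement 𝒜 ℬ 𝒞) [EnoughProjectives 𝒞]
    (P : ℬ → Prop)
    (hP : ∀ B : ℬ, P B ↔
      ((∀ (A : 𝒜) (f : B ⟶ R.iLow.obj A), f = 0) ∧
        (∀ (A : 𝒜) (E : ℬ) (f : R.iLow.obj A ⟶ E) (g : E ⟶ B) (w : f ≫ g = 0),
          (ShortComplex.mk f g w).ShortExact → ∃ s : B ⟶ E, s ≫ g = 𝟙 B))) :
    (ObjectProperty.ι P ⋙ R.jStar).Full ∧
    (ObjectProperty.ι P ⋙ R.jStar).Faithful ∧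
    (ObjectProperty.ι P ⋙ R.jStar).EssSurj := by
  have hi : ∀ X : ObjectProperty.FullSubcategory P, IsIso (R.adj₃.counit.app X.obj) := fun X =>
    R.counit_isIso _ ((hP _).1 X.property).1 ((hP _).1 X.property).2
  refine ⟨⟨fun {X Y} h => ?_⟩, ⟨fun {X Y} f g h => ?_⟩, ⟨fun C => ?_⟩⟩
  · have := hi X
    have := R.map_counit_isIso X.obj
    change R.jStar.obj X.obj ⟶ R.jStar.obj Y.obj at h
    refine ⟨ObjectProperty.homMk
      (inv (R.adj₃.counit.app X.obj) ≫ R.jShriek.map h ≫ R.adj₃.counit.app Y.obj), ?_⟩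
    change R.jStar.map
      (inv (R.adj₃.counit.app X.obj) ≫ R.jShriek.map h ≫ R.adj₃.counit.app Y.obj) = h
    rw [R.jStar.map_comp, R.jStar.map_comp, R.jStar.map_inv, IsIso.inv_comp_eq]
    have := R.unit_isIso (R.jStar.obj X.obj)
    rw [← cancel_epi (R.adj₃.unit.app (R.jStar.obj X.obj))]
    have e := R.adj₃.unit.naturality h
    dsimp at e
    rw [← Category.assoc, ← e, Category.assoc]
    simp
  · have := hi X
    apply ObjectProperty.hom_ext
    have h : R.jStar.map f.hom = R.jStar.map g.hom := h
    rw [← cancel_epi (R.adj₃.counit.app X.obj)]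
    have e1 := R.adj₃.counit.naturality f.hom
    have e2 := R.adj₃.counit.naturality g.hom
    dsimp at e1 e2
    rw [← e1, ← e2, h]
  · have := R.unit_isIso C
    exact ⟨⟨R.jShriek.obj C, (hP _).2 ⟨fun A f => R.jShriek_hom_zero f, R.jShriek_split C⟩⟩,
      ⟨(asIso (R.adj₃.unit.app C)).symm⟩⟩
end

section
/- Let (𝒜, ℬ, 𝒞) be a recollement of abelian categories and suppose 𝒞 has enough injective objects. For an object B of ℬ the following are equivalent: (a) there exist injective objects I₀, I₁ of 𝒞 and an exact sequence 0 → B → j_*(I₀) → j_*(I₁) in ℬ; (b) Hom_ℬ(i_*(A), B) = 0 for every object A of 𝒜, and every short exact sequence 0 → B → E → i_*(A) → 0 in ℬ (with A an object of 𝒜) splits. -/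
open CategoryTheory CategoryTheory.Limits

theorem aux_hom_zero {𝒜 ℬ 𝒞 : Type*} [Category 𝒜] [Category ℬ] [Category 𝒞]
    [Abelian 𝒜] [Abelian ℬ] [Abelian 𝒞]
    (R : AbelianRecollement 𝒜 ℬ 𝒞) (A : 𝒜) (I : 𝒞) (f : R.iLow.obj A ⟶ R.jLow.obj I) :
    f = 0 := by
  apply (R.adj₄.homEquiv _ _).symm.injective
  exact (R.jStar_iLow_zero A).eq_of_src _ _

theorem aux_unit_mono {𝒜 ℬ 𝒞 : Type*} [Category 𝒜] [Category ℬ] [Category 𝒞]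
    [Abelian 𝒜] [Abelian ℬ] [Abelian 𝒞]
    (R : AbelianRecollement 𝒜 ℬ 𝒞) (X : ℬ) (h : ∀ (A : 𝒜) (f : R.iLow.obj A ⟶ X), f = 0) :
    Mono (R.adj₄.unit.app X) := by
  obtain ⟨hl⟩ := R.exact₁ X
  apply Preadditive.mono_of_cancel_zero
  intro T x hx
  obtain ⟨l, e⟩ := KernelFork.IsLimit.lift' hl x hx
  have hz : R.adj₂.counit.app X = 0 := h _ _
  obtain ⟨l', e'⟩ : ∃ l' : T ⟶ R.iLow.obj (R.iShriek.obj X),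
    l' ≫ R.adj₂.counit.app X = x := ⟨l, e⟩
  rw [← e', hz]
  exact comp_zero

theorem aux_embed {𝒜 ℬ 𝒞 : Type*} [Category 𝒜] [Category ℬ] [Category 𝒞]
    [Abelian 𝒜] [Abelian ℬ] [Abelian 𝒞]
    (R : AbelianRecollement 𝒜 ℬ 𝒞) [EnoughInjectives 𝒞] (X : ℬ)
    (h : ∀ (A : 𝒜) (f : R.iLow.obj A ⟶ X), f = 0) :
    ∃ (I : 𝒞) (_ : Injective I) (g : X ⟶ R.jLow.obj I), Mono g := by
  have := aux_unit_mono R X h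
  have : PreservesLimitsOfSize.{0, 0} R.jLow := R.adj₄.rightAdjoint_preservesLimits
  exact ⟨Injective.under (R.jStar.obj X), inferInstance,
    R.adj₄.unit.app X ≫ R.jLow.map (Injective.ι (R.jStar.obj X)), mono_comp _ _⟩

/-- Let `(𝒜, ℬ, 𝒞)` be a recollement of abelian categories where `𝒞` has enough injectives.
For `B : ℬ` the following are equivalent: (a) there is an exact sequence
`0 ⟶ B ⟶ j_* I₀ ⟶ j_* I₁` with `I₀`, `I₁` injective in `𝒞`; (b) `Hom_ℬ(i_* A, B) = 0` for
all `A : 𝒜` and every short exact sequence `0 ⟶ B ⟶ E ⟶ i_* A ⟶ 0` splits. -/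
theorem stmt15 {𝒜 ℬ 𝒞 : Type*} [Category 𝒜] [Category ℬ] [Category 𝒞]
    [Abelian 𝒜] [Abelian ℬ] [Abelian 𝒞]
    (R : AbelianRecollement 𝒜 ℬ 𝒞) [EnoughInjectives 𝒞] (B : ℬ) :
    (∃ (I₀ I₁ : 𝒞) (_ : Injective I₀) (_ : Injective I₁)
        (g : B ⟶ R.jLow.obj I₀) (f : R.jLow.obj I₀ ⟶ R.jLow.obj I₁)
        (w : g ≫ f = 0), Mono g ∧ (ShortComplex.mk g f w).Exact) ↔
    ((∀ (A : 𝒜) (f : R.iLow.obj A ⟶ B), f = 0) ∧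
      (∀ (A : 𝒜) (E : ℬ) (f : B ⟶ E) (g : E ⟶ R.iLow.obj A) (w : f ≫ g = 0),
        (ShortComplex.mk f g w).ShortExact → ∃ r : E ⟶ B, f ≫ r = 𝟙 B)) := by
  constructor
  · rintro ⟨I₀, I₁, -, -, g, k, w, hg, hex⟩
    refine ⟨fun A f => ?_, fun A E f p wfp hS => ?_⟩
    · rw [← cancel_mono g, zero_comp]
      exact aux_hom_zero R A I₀ _
    · have := R.jStar_preservesFiniteLimits
      have := R.jStar_preservesFiniteColimits
      have := R.jStar_additive
      have hS' := hS.map_of_exact R.jStar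
      have hiso : IsIso (R.jStar.map f) := by
        have := hS'.mono_f
        have h2 : Epi (R.jStar.map f) :=
          hS'.exact.epi_f ((R.jStar_iLow_zero A).eq_of_tgt _ _)
        have h1 : Mono (R.jStar.map f) := this
        exact isIso_of_mono_of_epi _
      let h : E ⟶ R.jLow.obj I₀ := (R.adj₄.homEquiv _ _)
        (inv (R.jStar.map f) ≫ (R.adj₄.homEquiv _ _).symm g)
      have hfh : f ≫ h = g := by
        apply (R.adj₄.homEquiv _ _).symm.injective
        rw [Adjunction.homEquiv_naturality_left_symm]
        simp [h]
      have hk : h ≫ k = 0 := by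
        apply (R.adj₄.homEquiv _ _).symm.injective
        rw [← cancel_epi (R.jStar.map f), ← Adjunction.homEquiv_naturality_left_symm,
          ← Adjunction.homEquiv_naturality_left_symm, ← Category.assoc, hfh, w, comp_zero]
      have : Mono (ShortComplex.mk g k w).f := hg
      let r : E ⟶ B := hex.lift h hk
      have hr : r ≫ g = h := hex.lift_f h hk
      refine ⟨r, ?_⟩
      rw [← cancel_mono g, Category.assoc, hr, hfh, Category.id_comp]
  · rintro ⟨h0, h1⟩
    obtain ⟨I₀, hI₀, g, hg⟩ := aux_embed R B h0
    have hc : ∀ (A : 𝒜) (s : R.iLow.obj A ⟶ cokernel g), s = 0 := by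
      intro A s
      let f : B ⟶ pullback (cokernel.π g) s := pullback.lift g 0 (by simp)
      have hf1 : f ≫ pullback.fst (cokernel.π g) s = g := pullback.lift_fst _ _ _
      have hf2 : f ≫ pullback.snd (cokernel.π g) s = 0 := pullback.lift_snd _ _ _
      have hfm : Mono f := by
        have : Mono (f ≫ pullback.fst (cokernel.π g) s) := by rw [hf1]; exact hg
        exact mono_of_mono f (pullback.fst (cokernel.π g) s)
      have hex : (ShortComplex.mk g (cokernel.π g) (cokernel.condition g)).Exact :=
        ShortComplex.exact_cokernel g
      have : Mono (ShortComplex.mk g (cokernel.π g) (cokernel.condition g)).f := hg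
      have hE : (ShortComplex.mk f (pullback.snd (cokernel.π g) s) hf2).Exact := by
        apply ShortComplex.exact_of_f_is_kernel
        have key : ∀ {T : ℬ} (x : T ⟶ pullback (cokernel.π g) s)
            (_ : x ≫ pullback.snd (cokernel.π g) s = 0),
            (x ≫ pullback.fst (cokernel.π g) s) ≫ cokernel.π g = 0 := by
          intro T x hx
          rw [Category.assoc, pullback.condition, reassoc_of% hx, zero_comp]
        refine KernelFork.IsLimit.ofι' f hf2 (fun {T} x hx => ⟨hex.lift _ (key x hx), ?_⟩)
        apply pullback.hom_ext
        · rw [Category.assoc, hf1]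
          exact hex.lift_f _ (key x hx)
        · rw [Category.assoc, hf2, hx, comp_zero]
      have hepi : Epi (pullback.snd (cokernel.π g) s) := inferInstance
      have hS : (ShortComplex.mk f (pullback.snd (cokernel.π g) s) hf2).ShortExact :=
        { exact := hE, mono_f := hfm, epi_g := hepi }
      obtain ⟨r, hr⟩ := h1 A _ f _ hf2 hS
      have hd : f ≫ (pullback.fst (cokernel.π g) s - r ≫ g) = 0 := by
        rw [Preadditive.comp_sub, hf1, reassoc_of% hr, sub_self]
      have : Epi (ShortComplex.mk f (pullback.snd (cokernel.π g) s) hf2).g := hepi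
      have e := hE.g_desc _ hd
      have ez : hE.desc _ hd = 0 := aux_hom_zero R A I₀ _
      rw [ez, comp_zero] at e
      have e2 := sub_eq_zero.mp e.symm
      rw [← cancel_epi (pullback.snd (cokernel.π g) s), ← pullback.condition, e2]
      simp
    obtain ⟨I₁, hI₁, m, hm⟩ := aux_embed R _ hc
    refine ⟨I₀, I₁, hI₀, hI₁, g, cokernel.π g ≫ m, by simp, hg, ?_⟩
    have hex : (ShortComplex.mk g (cokernel.π g) (cokernel.condition g)).Exact :=
      ShortComplex.exact_cokernel g
    let φ : ShortComplex.mk g (cokernel.π g) (cokernel.condition g) ⟶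
        ShortComplex.mk g (cokernel.π g ≫ m) (by simp) :=
      { τ₁ := 𝟙 _, τ₂ := 𝟙 _, τ₃ := m }
    have : Epi φ.τ₁ := by dsimp [φ]; infer_instance
    have : IsIso φ.τ₂ := by dsimp [φ]; infer_instance
    have : Mono φ.τ₃ := hm
    exact (ShortComplex.exact_iff_of_epi_of_isIso_of_mono φ).1 hex
end

section
/- Let (𝒜, ℬ, 𝒞) be a recollement of abelian categories and suppose 𝒞 has enough injective objects. Let 𝒴 be the full subcategory of ℬ consisting of the objects B such that Hom_ℬ(i_*(A), B) = 0 for every object A of 𝒜 and every short exact sequence 0 → B → E → i_*(A) → 0 in ℬ splits. Then the restriction of j^* to 𝒴 is fully faithful and essentially surjective, i.e., j^* induces an equivalence of categories 𝒴 ≃ 𝒞. -/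
open CategoryTheory CategoryTheory.Limits

namespace AbelianRecollement

variable {𝒜 ℬ 𝒞 : Type*} [Category 𝒜] [Category ℬ] [Category 𝒞]
    [Abelian 𝒜] [Abelian ℬ] [Abelian 𝒞] (R : AbelianRecollement 𝒜 ℬ 𝒞)

theorem isIso_counit (C : 𝒞) : IsIso (R.adj₄.counit.app C) := by
  have := R.jLow_full
  have := R.jLow_faithful
  infer_instance

theorem isIso_map_unit (B : ℬ) : IsIso (R.jStar.map (R.adj₄.unit.app B)) := by
  have := R.isIso_counit (R.jStar.obj B)
  have h := R.adj₄.left_triangle_components B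
  have : IsIso (R.jStar.map (R.adj₄.unit.app B) ≫ R.adj₄.counit.app (R.jStar.obj B)) := by
    rw [h]; exact IsIso.id _
  exact IsIso.of_isIso_comp_right _ (R.adj₄.counit.app (R.jStar.obj B))

/-- if `j^* f` is an isomorphism, maps to `j_* C` extend along `f`. -/
theorem exists_ext {X Y : ℬ} (f : X ⟶ Y) (hf : IsIso (R.jStar.map f)) {C : 𝒞}
    (g : X ⟶ R.jLow.obj C) : ∃ r : Y ⟶ R.jLow.obj C, f ≫ r = g := by
  refine ⟨R.adj₄.homEquiv _ _ (inv (R.jStar.map f) ≫ (R.adj₄.homEquiv _ _).symm g), ?_⟩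
  rw [← R.adj₄.homEquiv_naturality_left]
  simp

theorem ext_of_epi {X Y : ℬ} (f : X ⟶ Y) (hf : IsIso (R.jStar.map f)) {C : 𝒞}
    (a b : Y ⟶ R.jLow.obj C) (h : f ≫ a = f ≫ b) : a = b := by
  apply (R.adj₄.homEquiv _ _).symm.injective
  rw [← cancel_epi (R.jStar.map f), ← R.adj₄.homEquiv_naturality_left_symm,
    ← R.adj₄.homEquiv_naturality_left_symm, h]

theorem comp_unit {X Y : ℬ} (f : X ⟶ Y) :
    R.adj₄.homEquiv _ _ (R.jStar.map f) = f ≫ R.adj₄.unit.app Y := by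
  rw [R.adj₄.homEquiv_unit]
  exact (R.adj₄.unit.naturality f).symm

theorem isIso_unit₁ (K : ℬ) (hK : IsZero (R.jStar.obj K)) : IsIso (R.adj₁.unit.app K) := by
  obtain ⟨h⟩ := R.exact₂ K
  have := R.jShriek_additive
  have hz : R.adj₃.counit.app K = 0 := (R.jShriek.map_isZero hK).eq_of_src _ _
  have : Mono (R.adj₁.unit.app K) := by
    obtain ⟨l, hl⟩ := CokernelCofork.IsColimit.desc' h (𝟙 K) (by rw [hz]; simp)
    have hl' : R.adj₁.unit.app K ≫ l = 𝟙 K := hl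
    have : IsSplitMono (R.adj₁.unit.app K) := ⟨⟨⟨l, hl'⟩⟩⟩
    infer_instance
  have : Epi (R.adj₁.unit.app K) := epi_of_isColimit_cofork h
  exact isIso_of_mono_of_epi _

theorem isIso_unit (B : ℬ) (h1 : ∀ (A : 𝒜) (f : R.iLow.obj A ⟶ B), f = 0)
    (h2 : ∀ (A : 𝒜) (E : ℬ) (f : B ⟶ E) (g : E ⟶ R.iLow.obj A) (w : f ≫ g = 0),
          (ShortComplex.mk f g w).ShortExact → ∃ r : E ⟶ B, f ≫ r = 𝟙 B) :
    IsIso (R.adj₄.unit.app B) := by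
  have hj := R.isIso_map_unit B
  have := R.jStar_additive
  have := R.jStar_preservesFiniteColimits
  have hm : Mono (R.adj₄.unit.app B) := by
    obtain ⟨h⟩ := R.exact₁ B
    apply Preadditive.mono_of_cancel_zero
    intro G g hg
    obtain ⟨l, hl⟩ := KernelFork.IsLimit.lift' h g hg
    rw [← hl]
    change l ≫ R.adj₂.counit.app B = 0
    exact (congrArg (fun t => l ≫ t) (h1 _ (R.adj₂.counit.app B))).trans comp_zero
  let η := R.adj₄.unit.app B
  have hK : IsZero (R.jStar.obj (cokernel η)) := by
    have h0 : R.jStar.map (cokernel.π η) = 0 := by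
      rw [← cancel_epi (R.jStar.map η), ← R.jStar.map_comp, cokernel.condition]
      simp
    rw [IsZero.iff_id_eq_zero, ← cancel_epi (R.jStar.map (cokernel.π η)), h0]
    simp
  have hu := R.isIso_unit₁ _ hK
  have w : η ≫ (cokernel.π η ≫ R.adj₁.unit.app (cokernel η)) = 0 := by simp
  obtain ⟨r, hr⟩ := h2 _ _ η (cokernel.π η ≫ R.adj₁.unit.app (cokernel η)) w (by
    have hc : IsColimit (CokernelCofork.ofπ _ w) :=
      IsColimit.ofIsoColimit (cokernelIsCokernel η)
        (Cofork.ext (asIso (R.adj₁.unit.app (cokernel η))) rfl)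
    exact
      { exact := ShortComplex.exact_of_g_is_cokernel _ hc
        mono_f := hm
        epi_g := by dsimp; infer_instance })
  exact ⟨r, hr, R.ext_of_epi η hj _ _ (by rw [← Category.assoc, hr]; simp; rfl)⟩

end AbelianRecollement

/-- Let `(𝒜, ℬ, 𝒞)` be a recollement of abelian categories where `𝒞` has enough injectives,
and let `𝒴 ⊆ ℬ` be the full subcategory of objects `B` with `Hom_ℬ(i_* A, B) = 0` for all
`A : 𝒜` and such that every short exact sequence `0 ⟶ B ⟶ E ⟶ i_* A ⟶ 0` splits.  Then the
restriction of `j^*` to `𝒴` is fully faithful and essentially surjective, i.e. induces an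
equivalence `𝒴 ≃ 𝒞`. -/
theorem stmt16 {𝒜 ℬ 𝒞 : Type*} [Category 𝒜] [Category ℬ] [Category 𝒞]
    [Abelian 𝒜] [Abelian ℬ] [Abelian 𝒞]
    (R : AbelianRecollement 𝒜 ℬ 𝒞) [EnoughInjectives 𝒞]
    (P : ℬ → Prop)
    (hP : ∀ B : ℬ, P B ↔
      ((∀ (A : 𝒜) (f : R.iLow.obj A ⟶ B), f = 0) ∧
        (∀ (A : 𝒜) (E : ℬ) (f : B ⟶ E) (g : E ⟶ R.iLow.obj A) (w : f ≫ g = 0),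
          (ShortComplex.mk f g w).ShortExact → ∃ r : E ⟶ B, f ≫ r = 𝟙 B))) :
    (ObjectProperty.ι P ⋙ R.jStar).Full ∧
    (ObjectProperty.ι P ⋙ R.jStar).Faithful ∧
    (ObjectProperty.ι P ⋙ R.jStar).EssSurj := by
  refine ⟨⟨?_⟩, ⟨?_⟩, ⟨?_⟩⟩
  · intro X Y f
    have := R.isIso_unit Y.obj ((hP _).1 Y.property).1 ((hP _).1 Y.property).2
    refine ⟨ObjectProperty.homMk
      (R.adj₄.homEquiv _ _ f ≫ inv (R.adj₄.unit.app Y.obj)), ?_⟩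
    apply (R.adj₄.homEquiv _ _).injective
    refine (R.comp_unit (R.adj₄.homEquiv _ _ f ≫ inv (R.adj₄.unit.app Y.obj))).trans ?_
    rw [Category.assoc]
    exact (congrArg (fun t => R.adj₄.homEquiv _ _ f ≫ t)
      (IsIso.inv_hom_id (R.adj₄.unit.app Y.obj))).trans (Category.comp_id _)
  · intro X Y f g h
    have := R.isIso_unit Y.obj ((hP _).1 Y.property).1 ((hP _).1 Y.property).2
    have h' : R.jStar.map f.hom = R.jStar.map g.hom := h
    ext
    apply (cancel_mono (R.adj₄.unit.app Y.obj)).1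
    exact (R.comp_unit f.hom).symm.trans ((congrArg _ h').trans (R.comp_unit g.hom))
  · intro C
    have hC : P (R.jLow.obj C) := by
      rw [hP]
      refine ⟨fun A f => ?_, fun A E f g w hS => ?_⟩
      · apply (R.adj₄.homEquiv _ _).symm.injective
        exact (R.jStar_iLow_zero A).eq_of_src _ _
      · have := R.jStar_additive
        have := R.jStar_preservesFiniteColimits
        have := R.jStar_preservesFiniteLimits
        have hS' := hS.map_of_exact R.jStar
        have := hS'.isIso_f_iff.2 (R.jStar_iLow_zero A)
        exact R.exists_ext f this (𝟙 _)
    have := R.isIso_counit C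
    exact ⟨⟨_, hC⟩, ⟨asIso (R.adj₄.counit.app C)⟩⟩
end

section
/- Let (𝒜, ℬ, 𝒞) be a recollement of abelian categories. If an object B of ℬ satisfies Hom_ℬ(B, i_*(A)) = 0 for every object A of 𝒜 and every short exact sequence 0 → i_*(A) → E → B → 0 in ℬ splits, then the counit ε_B : j_! j^*(B) → B of the adjunction (j_!, j^*) is an isomorphism. -/
open CategoryTheory CategoryTheory.Limits

/-- Let `(𝒜, ℬ, 𝒞)` be a recollement of abelian categories.  If `B : ℬ` satisfies
`Hom_ℬ(B, i_* A) = 0` for every `A : 𝒜` and every short exact sequence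
`0 ⟶ i_* A ⟶ E ⟶ B ⟶ 0` splits, then the counit `ε_B : j_! j^* B ⟶ B` of the adjunction
`(j_!, j^*)` is an isomorphism. -/
theorem stmt17 {𝒜 ℬ 𝒞 : Type*} [Category 𝒜] [Category ℬ] [Category 𝒞]
    [Abelian 𝒜] [Abelian ℬ] [Abelian 𝒞]
    (R : AbelianRecollement 𝒜 ℬ 𝒞) (B : ℬ)
    (h₁ : ∀ (A : 𝒜) (f : B ⟶ R.iLow.obj A), f = 0)
    (h₂ : ∀ (A : 𝒜) (E : ℬ) (f : R.iLow.obj A ⟶ E) (g : E ⟶ B) (w : f ≫ g = 0),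
      (ShortComplex.mk f g w).ShortExact → ∃ s : B ⟶ E, s ≫ g = 𝟙 B) :
    IsIso (R.adj₃.counit.app B) := by
  have := R.jShriek_full
  have := R.jShriek_faithful
  have := R.jStar_preservesFiniteLimits
  have := R.jStar_additive
  have := R.jLow_additive
  have hu : R.adj₁.unit.app B = 0 := h₁ _ _
  obtain ⟨hc⟩ := R.exact₂ B
  have hepi : Epi (R.adj₃.counit.app B) := by
    refine Preadditive.epi_of_cancel_zero _ fun {Z} g hg => ?_
    have h := hc.fac (CokernelCofork.ofπ g hg) WalkingParallelPair.one
    change R.adj₁.unit.app B ≫ _ = g at h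
    exact h.symm.trans ((congrArg (fun t => t ≫ hc.desc (CokernelCofork.ofπ g hg)) hu).trans
      zero_comp)
  have hiso : IsIso (R.jStar.map (R.adj₃.counit.app B)) := by
    have h := R.adj₃.right_triangle_components B
    exact IsIso.of_isIso_fac_left h
  have hK0 : R.jStar.map (kernel.ι (R.adj₃.counit.app B)) = 0 := by
    rw [← cancel_mono (R.jStar.map (R.adj₃.counit.app B)), ← R.jStar.map_comp,
      kernel.condition, R.jStar.map_zero, zero_comp]
  have hKz : IsZero (R.jStar.obj (kernel (R.adj₃.counit.app B))) :=
    IsZero.of_mono_eq_zero _ hK0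
  have hη : R.adj₄.unit.app (kernel (R.adj₃.counit.app B)) = 0 :=
    (R.jLow.map_isZero hKz).eq_of_tgt _ _
  obtain ⟨hl⟩ := R.exact₁ (kernel (R.adj₃.counit.app B))
  have hKiso : IsIso (R.adj₂.counit.app (kernel (R.adj₃.counit.app B))) :=
    KernelFork.IsLimit.isIso_ι _ hl hη
  obtain ⟨s, hs⟩ := h₂ _ _ (R.adj₂.counit.app (kernel (R.adj₃.counit.app B)) ≫
      kernel.ι (R.adj₃.counit.app B)) (R.adj₃.counit.app B) (by simp) (by
    have hex : (ShortComplex.mk (kernel.ι (R.adj₃.counit.app B)) (R.adj₃.counit.app B)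
        (kernel.condition _)).ShortExact :=
      { exact := ShortComplex.exact_kernel _
        mono_f := by dsimp; infer_instance
        epi_g := hepi }
    refine ShortComplex.shortExact_of_iso ?_ hex
    refine ShortComplex.isoMk
      (asIso (R.adj₂.counit.app (kernel (R.adj₃.counit.app B)))).symm (Iso.refl _) (Iso.refl _)
      ?_ ?_
    · simp
    · simp)
  refine ⟨s, ?_, hs⟩
  apply (R.adj₃.homEquiv _ _).injective
  rw [R.adj₃.homEquiv_unit, R.adj₃.homEquiv_unit]
  congr 1
  rw [← cancel_mono (R.jStar.map (R.adj₃.counit.app B)), ← R.jStar.map_comp, ← R.jStar.map_comp]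
  congr 1
  erw [Category.assoc, hs, Category.id_comp, Category.comp_id]
end

section
/- Let 𝒜 and ℬ be categories, W₁ a class of morphisms of 𝒜 and W₂ a class of morphisms of ℬ, and let L₁ : 𝒜 ⥤ 𝒜̃ and L₂ : ℬ ⥤ ℬ̃ be localization functors with respect to W₁ and W₂ respectively. Let F : 𝒜 ⥤ ℬ and G : ℬ ⥤ 𝒜 be functors with an adjunction F ⊣ G such that F sends every morphism of W₁ to a morphism of W₂ and G sends every morphism of W₂ to a morphism of W₁; let F̃ : 𝒜̃ ⥤ ℬ̃ and G̃ : ℬ̃ ⥤ 𝒜̃ be the induced functors, characterized up to natural isomorphism by F̃ ∘ L₁ ≅ L₂ ∘ F and G̃ ∘ L₂ ≅ L₁ ∘ G. If G is fully faithful, then G̃ is fully faithful; and if F is fully faithful, then F̃ is fully faithful. -/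
open CategoryTheory

/-- Given localization functors `L₁ : 𝒜 ⥤ 𝒜'` and `L₂ : ℬ ⥤ ℬ'` with respect to classes of
morphisms `W₁` and `W₂`, an adjunction `F ⊣ G` with `F` sending `W₁` into `W₂` and `G`
sending `W₂` into `W₁`, and induced functors `F' : 𝒜' ⥤ ℬ'` and `G' : ℬ' ⥤ 𝒜'` (characterized
by `F' ∘ L₁ ≅ L₂ ∘ F` and `G' ∘ L₂ ≅ L₁ ∘ G`): if `G` is fully faithful then so is `G'`, and
if `F` is fully faithful then so is `F'`. -/
theorem stmt19 {𝒜 ℬ 𝒜' ℬ' : Type*} [Category 𝒜] [Category ℬ] [Category 𝒜'] [Category ℬ']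
    (W₁ : MorphismProperty 𝒜) (W₂ : MorphismProperty ℬ)
    (L₁ : 𝒜 ⥤ 𝒜') (L₂ : ℬ ⥤ ℬ')
    [L₁.IsLocalization W₁] [L₂.IsLocalization W₂]
    (F : 𝒜 ⥤ ℬ) (G : ℬ ⥤ 𝒜) (adj : F ⊣ G)
    (hF : ∀ ⦃X Y : 𝒜⦄ (f : X ⟶ Y), W₁ f → W₂ (F.map f))
    (hG : ∀ ⦃X Y : ℬ⦄ (f : X ⟶ Y), W₂ f → W₁ (G.map f))
    (F' : 𝒜' ⥤ ℬ') (G' : ℬ' ⥤ 𝒜')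
    (eF : L₁ ⋙ F' ≅ F ⋙ L₂) (eG : L₂ ⋙ G' ≅ G ⋙ L₁) :
    ((G.Full ∧ G.Faithful) → (G'.Full ∧ G'.Faithful)) ∧
    ((F.Full ∧ F.Faithful) → (F'.Full ∧ F'.Faithful)) := by
  letI : CatCommSq F L₁ L₂ F' := ⟨eF.symm⟩
  letI : CatCommSq G L₂ L₁ G' := ⟨eG.symm⟩
  let A : F' ⊣ G' := adj.localization L₁ W₁ L₂ W₂ F' G'
  constructor
  · rintro ⟨h1, h2⟩
    haveI : ∀ X, IsIso (A.counit.app X) := by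
      intro X
      have e := Localization.essSurj L₂ W₂
      rw [NatTrans.isIso_app_iff_of_iso A.counit (L₂.objObjPreimageIso X).symm]
      rw [adj.localization_counit_app L₁ W₁ L₂ W₂ F' G']
      infer_instance
    haveI : IsIso A.counit := NatIso.isIso_of_isIso_app _
    exact ⟨A.fullyFaithfulROfIsIsoCounit.full, A.fullyFaithfulROfIsIsoCounit.faithful⟩
  · rintro ⟨h1, h2⟩
    haveI : ∀ X, IsIso (A.unit.app X) := by
      intro X
      have e := Localization.essSurj L₁ W₁
      rw [NatTrans.isIso_app_iff_of_iso A.unit (L₁.objObjPreimageIso X).symm]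
      rw [adj.localization_unit_app L₁ W₁ L₂ W₂ F' G']
      infer_instance
    haveI : IsIso A.unit := NatIso.isIso_of_isIso_app _
    exact ⟨A.fullyFaithfulLOfIsIsoUnit.full, A.fullyFaithfulLOfIsIsoUnit.faithful⟩
end
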